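/- For all integers L, M, i, j with 0 ≤ i ≤ M, 0 ≤ i ≤ L and 0 ≤ j ≤ L, the identity q^{T_i + T_j} [M; i] [L; j] = \sum_{k=0}^{\min(i,j)} q^{T_{i+j-k} + T_k} \binom{M}{M-i, i-k, k}_q [L-i; j-k] holds as an identity of polynomials in q, where \binom{M}{M-i, i-k, k}_q = (q)_M / ((q)_{M-i} (q)_{i-k} (q)_k) is the q-multinomial coefficient of order 3 and [m; r] denotes the Gaussian binomial coefficient. -/

import Mathlib

open Finset

/-- `(q)_n = (q;q)_n = ∏_{t=0}^{n-1} (1 - q^{t+1})` in `ℚ(q)`. -/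
noncomputable def qPoch (n : ℕ) : RatFunc ℚ :=
  ∏ t ∈ Finset.range n, (1 - (RatFunc.X : RatFunc ℚ) ^ (t + 1))

/-- The Gaussian (q-)binomial coefficient `[m; r] = (q)_m / ((q)_r (q)_{m-r})` for
`0 ≤ r ≤ m`, and `0` otherwise. -/
noncomputable def qbin (m r : ℤ) : RatFunc ℚ :=
  if 0 ≤ r ∧ r ≤ m then qPoch m.toNat / (qPoch r.toNat * qPoch (m - r).toNat) else 0

/-- The q-multinomial coefficient of order 3,
`[u+v+w; u, v, w] = (q)_{u+v+w} / ((q)_u (q)_v (q)_w)`, set to `0` if any of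
`u, v, w` is negative. -/
noncomputable def qtrinom (u v w : ℤ) : RatFunc ℚ :=
  if 0 ≤ u ∧ 0 ≤ v ∧ 0 ≤ w then
    qPoch (u + v + w).toNat / (qPoch u.toNat * qPoch v.toNat * qPoch w.toNat) else 0

/-- `T n = n(n+1)/2`, the n-th triangular number (on `ℤ`, the division is exact). -/
def triZ (n : ℤ) : ℤ := n * (n + 1) / 2

/-!
Everything except the factor `[M; i]` is one form of the `q`-Vandermonde identity
`[i + n; j] = ∑ₖ q^{(i - k)(j - k)} [i; k] [n; j - k]`: multiplying it by `q^{T_i + T_j}` turns the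
exponents into `T_{i+j-k} + T_k`, because `T_{a+b} = T_a + T_b + ab`. The inert factor `[M; i]`
then joins `[i; k]` to form the trinomial coefficient. All of this happens over an arbitrary
commutative semiring once Gaussian binomials are defined by Pascal's recurrence; only the
comparison with quotients of `(q)_n` needs the `(q)_n` to be invertible.
-/

/-- The triangular number `T_n`. The division is exact; `triZ` is the same function on `ℤ`. -/
def triangular (n : ℕ) : ℕ := n * (n + 1) / 2

lemma two_mul_triangular (n : ℕ) : 2 * triangular n = n * (n + 1) :=
  Nat.mul_div_cancel' (Nat.even_mul_succ_self n).two_dvd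

lemma triangular_add (m n : ℕ) : triangular (m + n) = triangular m + triangular n + m * n := by
  linarith [two_mul_triangular m, two_mul_triangular n, two_mul_triangular (m + n)]

section CommSemiring

variable {R : Type*} [CommSemiring R]

/-- The Gaussian binomial coefficient `[m; r]` at an arbitrary element `q` of a commutative
semiring. It is defined by the `q`-Pascal recurrence, so that no division is involved. -/
def gaussBinom (q : R) : ℕ → ℕ → R
  | _, 0 => 1
  | 0, _ + 1 => 0
  | m + 1, r + 1 => gaussBinom q m r + q ^ (r + 1) * gaussBinom q m (r + 1)

/-- The `q`-trinomial coefficient `[a + b + c; a, b, c]`, as a product of Gaussian binomials. -/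
def gaussTrinom (q : R) (a b c : ℕ) : R :=
  gaussBinom q (a + b + c) (b + c) * gaussBinom q (b + c) c

variable (q : R)

@[simp]
lemma gaussBinom_zero_right (m : ℕ) : gaussBinom q m 0 = 1 := by
  cases m <;> rfl

@[simp]
lemma gaussBinom_zero_succ (r : ℕ) : gaussBinom q 0 (r + 1) = 0 := rfl

lemma gaussBinom_succ_succ (m r : ℕ) :
    gaussBinom q (m + 1) (r + 1) = gaussBinom q m r + q ^ (r + 1) * gaussBinom q m (r + 1) := rfl

lemma gaussBinom_eq_zero_of_lt : ∀ {m r : ℕ}, m < r → gaussBinom q m r = 0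
  | 0, _ + 1, _ => rfl
  | m + 1, r + 1, h => by
    have hmr : m < r := Nat.lt_of_succ_lt_succ h
    rw [gaussBinom_succ_succ, gaussBinom_eq_zero_of_lt hmr,
      gaussBinom_eq_zero_of_lt (hmr.trans r.lt_succ_self), mul_zero, add_zero]

@[simp]
lemma gaussBinom_self : ∀ m : ℕ, gaussBinom q m m = 1
  | 0 => rfl
  | m + 1 => by
    rw [gaussBinom_succ_succ, gaussBinom_self m, gaussBinom_eq_zero_of_lt q m.lt_succ_self,
      mul_zero, add_zero]

-- The truncation in `m - p.1` is harmless: `[m; p.1]` vanishes for `m < p.1`.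
theorem gaussBinom_add_eq_sum_antidiagonal (m n j : ℕ) :
    gaussBinom q (m + n) j = ∑ p ∈ antidiagonal j,
      q ^ ((m - p.1) * p.2) * gaussBinom q m p.1 * gaussBinom q n p.2 := by
  induction m generalizing j with
  | zero => cases j <;> simp [Finset.Nat.sum_antidiagonal_succ]
  | succ m ih =>
    cases j with
    | zero => simp
    | succ j =>
      have pascal_term : ∀ p ∈ antidiagonal j,
          q ^ ((m + 1 - (p.1 + 1)) * p.2) * gaussBinom q (m + 1) (p.1 + 1) * gaussBinom q n p.2 =
            q ^ ((m - p.1) * p.2) * gaussBinom q m p.1 * gaussBinom q n p.2 +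
            q ^ (j + 1) *
              (q ^ ((m - (p.1 + 1)) * p.2) * gaussBinom q m (p.1 + 1) * gaussBinom q n p.2) := by
        rintro ⟨k, l⟩ hkl
        obtain rfl : k + l = j := mem_antidiagonal.mp hkl
        rw [gaussBinom_succ_succ, Nat.add_sub_add_right]
        obtain hmk | hkm := Nat.lt_or_ge m (k + 1)
        · simp only [gaussBinom_eq_zero_of_lt q hmk, mul_zero, zero_mul, add_zero]
        · obtain ⟨d, rfl⟩ := Nat.exists_eq_add_of_le hkm
          rw [show k + 1 + d - k = d + 1 by lia, Nat.add_sub_cancel_left]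
          ring
      rw [Nat.add_right_comm, gaussBinom_succ_succ, ih j, ih (j + 1),
        Finset.Nat.sum_antidiagonal_succ, Finset.Nat.sum_antidiagonal_succ,
        sum_congr rfl pascal_term, sum_add_distrib, ← mul_sum]
      simp only [gaussBinom_zero_right, Nat.sub_zero]
      ring

theorem pow_triangular_mul_gaussBinom_add (i n j : ℕ) :
    q ^ (triangular i + triangular j) * gaussBinom q (i + n) j =
      ∑ k ∈ range (min i j + 1), q ^ (triangular (i + j - k) + triangular k) *
        gaussBinom q i k * gaussBinom q n (j - k) := by
  rw [gaussBinom_add_eq_sum_antidiagonal,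
    Finset.Nat.sum_antidiagonal_eq_sum_range_succ_mk, mul_sum]
  symm
  refine sum_subset_zero_on_sdiff (range_mono (by lia)) (fun k hk => ?_) (fun k hk => ?_)
  · have hik : i < k := by
      simp only [mem_sdiff, mem_range] at hk
      lia
    simp only [gaussBinom_eq_zero_of_lt q hik, mul_zero, zero_mul]
  · rw [mem_range, Nat.lt_succ_iff, le_min_iff] at hk
    obtain ⟨a, rfl⟩ := Nat.exists_eq_add_of_le' hk.1
    obtain ⟨b, rfl⟩ := Nat.exists_eq_add_of_le' hk.2
    have exponent : triangular (a + k + (b + k) - k) + triangular k =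
        triangular (a + k) + triangular (b + k) + a * b := by
      rw [← add_assoc, Nat.add_sub_cancel, Nat.add_right_comm]
      simp only [triangular_add]
      ring
    rw [exponent, Nat.add_sub_cancel, Nat.add_sub_cancel]
    ring

theorem finite_schur_identity_general {L M i : ℕ} (hiM : i ≤ M) (hiL : i ≤ L) (j : ℕ) :
    q ^ (triangular i + triangular j) * gaussBinom q M i * gaussBinom q L j =
      ∑ k ∈ range (min i j + 1), q ^ (triangular (i + j - k) + triangular k) *
        gaussTrinom q (M - i) (i - k) k * gaussBinom q (L - i) (j - k) := by
  obtain ⟨n, rfl⟩ := Nat.exists_eq_add_of_le hiL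
  rw [mul_right_comm, pow_triangular_mul_gaussBinom_add, sum_mul, Nat.add_sub_cancel_left]
  refine sum_congr rfl fun k hk => ?_
  have hki : k ≤ i := by
    rw [mem_range] at hk
    lia
  rw [gaussTrinom, Nat.sub_add_cancel hki, add_assoc, Nat.sub_add_cancel hki,
    Nat.sub_add_cancel hiM]
  ring

end CommSemiring

section CommRing

variable {R : Type*} [CommRing R]

/-- `(q;q)_n = (1 - q)(1 - q^2) ⋯ (1 - q^n)` in an arbitrary commutative ring; `qPoch` is the case
of the indeterminate `q` of `ℚ(q)`. -/
def qPochhammer (q : R) (n : ℕ) : R :=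
  ∏ t ∈ range n, (1 - q ^ (t + 1))

variable (q : R)

@[simp]
lemma qPochhammer_zero : qPochhammer q 0 = 1 := prod_range_zero _

lemma qPochhammer_succ (n : ℕ) : qPochhammer q (n + 1) = qPochhammer q n * (1 - q ^ (n + 1)) :=
  prod_range_succ _ _

theorem gaussBinom_mul_qPochhammer_mul_qPochhammer : ∀ r s : ℕ,
    gaussBinom q (r + s) r * (qPochhammer q r * qPochhammer q s) = qPochhammer q (r + s)
  | 0, s => by simp
  | r + 1, 0 => by simp
  | r + 1, s + 1 => by
    have left := gaussBinom_mul_qPochhammer_mul_qPochhammer r (s + 1)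
    have right := gaussBinom_mul_qPochhammer_mul_qPochhammer (r + 1) s
    rw [← Nat.add_right_comm r s 1] at right
    rw [← add_assoc r s 1, qPochhammer_succ q s] at left
    rw [qPochhammer_succ q r] at right
    rw [show r + 1 + (s + 1) = r + s + 1 + 1 by lia, gaussBinom_succ_succ,
      qPochhammer_succ q (r + s + 1), qPochhammer_succ q r, qPochhammer_succ q s]
    -- `1 - q^{r+s+2} = (1 - q^{r+1}) + q^{r+1} (1 - q^{s+1})`
    linear_combination (1 - q ^ (r + 1)) * left + q ^ (r + 1) * (1 - q ^ (s + 1)) * right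

theorem gaussTrinom_mul_qPochhammer_mul_qPochhammer_mul_qPochhammer (a b c : ℕ) :
    gaussTrinom q a b c * (qPochhammer q a * qPochhammer q b * qPochhammer q c) =
      qPochhammer q (a + b + c) := by
  have outer := gaussBinom_mul_qPochhammer_mul_qPochhammer q (b + c) a
  have inner := gaussBinom_mul_qPochhammer_mul_qPochhammer q c b
  rw [add_comm (b + c) a, ← add_assoc] at outer
  rw [add_comm c b] at inner
  rw [gaussTrinom]
  linear_combination outer + gaussBinom q (a + b + c) (b + c) * qPochhammer q a * inner

end CommRing

lemma qPoch_ne_zero (n : ℕ) : qPoch n ≠ 0 := by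
  refine prod_ne_zero_iff.mpr fun t _ h => ?_
  have X_pow_eq_one : (Polynomial.X : Polynomial ℚ) ^ (t + 1) = 1 :=
    RatFunc.algebraMap_injective ℚ <| by
      rw [map_pow, RatFunc.algebraMap_X, map_one, sub_eq_zero.mp h]
  simpa using congrArg Polynomial.natDegree X_pow_eq_one

lemma qbin_natCast (m r : ℕ) : qbin m r = gaussBinom RatFunc.X m r := by
  rw [qbin]
  split_ifs with h
  · obtain ⟨s, rfl⟩ := Nat.exists_eq_add_of_le (Nat.cast_le.mp h.2)
    rw [div_eq_iff (mul_ne_zero (qPoch_ne_zero _) (qPoch_ne_zero _)),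
      Nat.cast_add, add_sub_cancel_left, ← Nat.cast_add]
    exact (gaussBinom_mul_qPochhammer_mul_qPochhammer RatFunc.X r s).symm
  · rw [gaussBinom_eq_zero_of_lt _ (by lia)]

lemma qtrinom_natCast (a b c : ℕ) : qtrinom a b c = gaussTrinom RatFunc.X a b c := by
  rw [qtrinom, if_pos (by lia), ← Nat.cast_add, ← Nat.cast_add,
    div_eq_iff (mul_ne_zero (mul_ne_zero (qPoch_ne_zero _) (qPoch_ne_zero _)) (qPoch_ne_zero _))]
  exact (gaussTrinom_mul_qPochhammer_mul_qPochhammer_mul_qPochhammer RatFunc.X a b c).symm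

lemma triZ_natCast (n : ℕ) : triZ n = triangular n := by
  rw [triZ, triangular]
  norm_cast

lemma sum_Icc_zero_natCast {A : Type*} [AddCommMonoid A] (n : ℕ) (f : ℤ → A) :
    ∑ k ∈ Icc (0 : ℤ) n, f k = ∑ k ∈ range (n + 1), f k := by
  rw [Int.Icc_eq_finset_map, sum_map, show ((n : ℤ) + 1 - 0).toNat = n + 1 by lia]
  simp

/-- Identity (4.8): for `0 ≤ i ≤ M`, `0 ≤ i ≤ L`, `0 ≤ j ≤ L`,
`q^{T_i+T_j} [M; i] [L; j]
  = ∑_k q^{T_{i+j-k}+T_k} [M; M-i, i-k, k] [L-i; j-k]`. -/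
theorem finite_schur_identity (L M i j : ℤ)
    (hi : 0 ≤ i) (hiM : i ≤ M) (hiL : i ≤ L) (hj : 0 ≤ j) (hjL : j ≤ L) :
    (RatFunc.X : RatFunc ℚ) ^ (triZ i + triZ j) * qbin M i * qbin L j =
    ∑ k ∈ Finset.Icc (0 : ℤ) (min i j),
      (RatFunc.X : RatFunc ℚ) ^ (triZ (i + j - k) + triZ k) *
        qtrinom (M - i) (i - k) k * qbin (L - i) (j - k) := by
  lift i to ℕ using hi
  lift j to ℕ using hj
  lift M to ℕ using by lia
  lift L to ℕ using by lia
  rw [Nat.cast_le] at hiM hiL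
  rw [← Nat.cast_min, sum_Icc_zero_natCast, triZ_natCast, triZ_natCast, ← Nat.cast_add,
    zpow_natCast, qbin_natCast, qbin_natCast, finite_schur_identity_general _ hiM hiL]
  refine sum_congr rfl fun k hk => ?_
  obtain ⟨hki, hkj⟩ := le_min_iff.mp (mem_range_succ_iff.mp hk)
  rw [← Nat.cast_add i j, ← Nat.cast_sub (hki.trans (Nat.le_add_right i j)),
    ← Nat.cast_sub hiM, ← Nat.cast_sub hiL, ← Nat.cast_sub hki, ← Nat.cast_sub hkj,
    triZ_natCast, triZ_natCast, ← Nat.cast_add, zpow_natCast, qtrinom_natCast, qbin_natCast]
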